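/- Let A, B ∈ F{x,y} be linear differential polynomials (total degree at most 1) with A ∉ F and B ∉ F. Suppose the linear differential curve (C,A) is unirational, i.e. there exist a differentially transcendental u ∈ E and η₁, η₂ ∈ F⟨{u}⟩, not both in F, with I((η₁,η₂)) = [A]. If [A] ⊆ [B], then [A] = [B]. -/

import Mathlib

/-! The generators `dᵏB` of `[B]` are affine forms with strictly increasing orders, so no
nontrivial `F`-linear combination of them is constant (`one_notMem_span_iterate`). Hence, as for
any consistent system of affine equations, an affine form in `[B]` is an `F`-linear combination of
them (`mem_span_of_mem_ideal_span`). In particular `A = ∑ cₖ dᵏB` with the `cₖ ∈ F` not all zero,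
and `[B]` contains no nonzero constant.

Evaluating at the generic point `η` of `(C, A)`, the element `w = B(η)` of `F⟨u⟩` satisfies the
linear differential equation `∑ cₖ Dᵏw = 0`. Since `u` is differentially transcendental, `D` raises
the order of every element of `F⟨u⟩ ∖ F` by exactly one (`derivation_notMem_ordField`), so the
derivatives of such an element are linearly independent over `F`. Therefore `w = b ∈ F`
(`mem_range_of_operator_eq_zero`).

Now `B - b ∈ I(η) = [A] ⊆ [B]`, so `b ∈ [B]`, which forces `b = 0` and `B ∈ I(η) = [A]`. -/

open MvPolynomial

noncomputable section

namespace DiffCurve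

variable (F : Type*) {E : Type*} [Field F] [Field E] [Algebra F E]

/-- `F⟨S⟩`: the intermediate field of `E/F` generated by all iterated derivatives of
elements of `S`. -/
def genDF (D : Derivation ℤ E E) (S : Set E) : IntermediateField F E :=
  IntermediateField.adjoin F {x | ∃ s ∈ S, ∃ k : ℕ, (⇑D)^[k] s = x}

/-- `u` is differentially transcendental over `F`. -/
def DiffTrans (D : Derivation ℤ E E) (u : E) : Prop :=
  AlgebraicIndependent F (fun k : ℕ => (⇑D)^[k] u)

/-- Evaluation of `P ∈ F{u}` at `v`: the `F`-algebra map sending `u_k ↦ D^k v`. -/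
def evalD (D : Derivation ℤ E E) (v : E) : MvPolynomial ℕ F →ₐ[F] E :=
  aeval fun k => (⇑D)^[k] v

/-- Evaluation of `A ∈ F{x,y}` at `(η₁, η₂)`: `x_k ↦ D^k η₁`, `y_k ↦ D^k η₂`. -/
def evalD2 (D : Derivation ℤ E E) (η₁ η₂ : E) : MvPolynomial (Fin 2 × ℕ) F →ₐ[F] E :=
  aeval fun p => (⇑D)^[p.2] (if p.1 = 0 then η₁ else η₂)

variable {F}

/-- The order of `P ∈ F{u}`: the largest `k` such that `u_k` occurs (`⊥` if none). -/
def ordU (P : MvPolynomial ℕ F) : WithBot ℕ := P.vars.max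

/-- `ord_x` (for `i = 0`) resp. `ord_y` (for `i = 1`) of `A ∈ F{x,y}`. -/
def ordIdx (i : Fin 2) (A : MvPolynomial (Fin 2 × ℕ) F) : WithBot ℕ :=
  ((A.vars.filter fun v => v.1 = i).image Prod.snd).max

/-- `ord(A) = max(ord_x A, ord_y A)`. -/
def ordXY (A : MvPolynomial (Fin 2 × ℕ) F) : WithBot ℕ :=
  max (ordIdx 0 A) (ordIdx 1 A)

/-- The separant of `A` w.r.t. `x`: `∂A/∂x_s` where `s = ord_x A` (junk value `1` if
`ord_x A = ⊥`). -/
def sepX (A : MvPolynomial (Fin 2 × ℕ) F) : MvPolynomial (Fin 2 × ℕ) F :=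
  WithBot.recBotCoe 1 (fun s => pderiv ((0 : Fin 2), s) A) (ordIdx 0 A)

/-- The differential ideal `[A]` generated by `A`, for a derivation `d`. -/
def diffIdeal {R : Type*} [CommRing R] (d : Derivation ℤ R R) (A : R) : Ideal R :=
  Ideal.span (Set.range fun k : ℕ => (⇑d)^[k] A)

/-- The general component `sat(A) = [A] : S_A^∞` (as a set). -/
def satSet (dxy : Derivation ℤ (MvPolynomial (Fin 2 × ℕ) F) (MvPolynomial (Fin 2 × ℕ) F))
    (A : MvPolynomial (Fin 2 × ℕ) F) : Set (MvPolynomial (Fin 2 × ℕ) F) :=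
  {f | ∃ m : ℕ, sepX A ^ m * f ∈ diffIdeal dxy A}

variable (F)

/-- `(u, P₁, Q₁, P₂, Q₂)` is a differential rational parametrization of the differential
curve `(C, A)`. -/
def IsParam (D : Derivation ℤ E E)
    (dxy : Derivation ℤ (MvPolynomial (Fin 2 × ℕ) F) (MvPolynomial (Fin 2 × ℕ) F))
    (A : MvPolynomial (Fin 2 × ℕ) F) (u : E) (P₁ Q₁ P₂ Q₂ : MvPolynomial ℕ F) : Prop :=
  DiffTrans F D u ∧
  P₁ ≠ 0 ∧ Q₁ ≠ 0 ∧ IsRelPrime P₁ Q₁ ∧ P₂ ≠ 0 ∧ Q₂ ≠ 0 ∧ IsRelPrime P₂ Q₂ ∧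
  ¬ (evalD F D u P₁ / evalD F D u Q₁ ∈ (algebraMap F E).range ∧
     evalD F D u P₂ / evalD F D u Q₂ ∈ (algebraMap F E).range) ∧
  {B : MvPolynomial (Fin 2 × ℕ) F |
      evalD2 F D (evalD F D u P₁ / evalD F D u Q₁) (evalD F D u P₂ / evalD F D u Q₂) B = 0}
    = satSet dxy A

/-- A proper differential rational parametrization: additionally
`F⟨η₁, η₂⟩ = F⟨u⟩`. -/
def IsProperParam (D : Derivation ℤ E E)
    (dxy : Derivation ℤ (MvPolynomial (Fin 2 × ℕ) F) (MvPolynomial (Fin 2 × ℕ) F))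
    (A : MvPolynomial (Fin 2 × ℕ) F) (u : E) (P₁ Q₁ P₂ Q₂ : MvPolynomial ℕ F) : Prop :=
  IsParam F D dxy A u P₁ Q₁ P₂ Q₂ ∧
  genDF F D {evalD F D u P₁ / evalD F D u Q₁, evalD F D u P₂ / evalD F D u Q₂}
    = genDF F D {u}

/-- The projection `F{x,y,u} → F{x,y}` sending `u_k ↦ 0` and keeping `x_k`, `y_k`. -/
def projXY : MvPolynomial (Fin 3 × ℕ) F →ₐ[F] MvPolynomial (Fin 2 × ℕ) F :=
  aeval fun p => if h : (p.1 : ℕ) < 2 then X ((⟨p.1, h⟩ : Fin 2), p.2) else 0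

/-- The `i`-th row polynomial of the differential resultant matrix:
`d^{m₂}f₁, …, f₁, d^{m₁}f₂, …, f₂` where `f₁ = x₀·Q₁ − P₁`, `f₂ = y₀·Q₂ − P₂`
in `F{x,y,u}`. -/
def resRow (dxyu : Derivation ℤ (MvPolynomial (Fin 3 × ℕ) F) (MvPolynomial (Fin 3 × ℕ) F))
    (P₁ Q₁ P₂ Q₂ : MvPolynomial ℕ F) (m₁ m₂ : ℕ) (i : ℕ) : MvPolynomial (Fin 3 × ℕ) F :=
  if i ≤ m₂ then
    (⇑dxyu)^[m₂ - i] (X ((0 : Fin 3), 0) * rename (fun k => ((2 : Fin 3), k)) Q₁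
      - rename (fun k => ((2 : Fin 3), k)) P₁)
  else
    (⇑dxyu)^[m₁ + m₂ + 1 - i] (X ((1 : Fin 3), 0) * rename (fun k => ((2 : Fin 3), k)) Q₂
      - rename (fun k => ((2 : Fin 3), k)) P₂)

/-- The differential resultant `δ-Res(f₁, f₂) ∈ F{x,y}`: the determinant of the
`(m₁+m₂+2) × (m₁+m₂+2)` matrix whose rows are the coefficient vectors of
`d^{m₂}f₁, …, f₁, d^{m₁}f₂, …, f₂` w.r.t. `u_{m₁+m₂}, …, u_1, u_0, 1`. -/
def deltaRes (dxyu : Derivation ℤ (MvPolynomial (Fin 3 × ℕ) F) (MvPolynomial (Fin 3 × ℕ) F))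
    (P₁ Q₁ P₂ Q₂ : MvPolynomial ℕ F) (m₁ m₂ : ℕ) : MvPolynomial (Fin 2 × ℕ) F :=
  Matrix.det (Matrix.of fun i j : Fin (m₁ + m₂ + 2) =>
    if (j : ℕ) ≤ m₁ + m₂ then
      projXY F (pderiv ((2 : Fin 3), m₁ + m₂ - (j : ℕ)) (resRow F dxyu P₁ Q₁ P₂ Q₂ m₁ m₂ i))
    else projXY F (resRow F dxyu P₁ Q₁ P₂ Q₂ m₁ m₂ i))

/-- A linear homogeneous differential polynomial `L = Σ_k a_k u_k` in `F{u}`. -/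
def IsLinHom {F : Type*} [Field F] (L : MvPolynomial ℕ F) : Prop :=
  ∀ m ∈ L.support, ∃ k : ℕ, m = Finsupp.single k 1

/-! ### Orders of elements of `F⟨u⟩` -/

/-- Elements of `F⟨u⟩` of order `< n`: the field `F(u, Du, …, D^{n-1}u)`. -/
def ordField (D : Derivation ℤ E E) (u : E) (n : ℕ) : IntermediateField F E :=
  IntermediateField.adjoin F ((fun k : ℕ => (⇑D)^[k] u) '' Set.Iio n)

lemma ordField_mono (D : Derivation ℤ E E) (u : E) {m n : ℕ} (h : m ≤ n) :
    ordField F D u m ≤ ordField F D u n :=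
  IntermediateField.adjoin.mono _ _ _ (Set.image_mono (Set.Iio_subset_Iio h))

lemma iterate_mem_ordField (D : Derivation ℤ E E) (u : E) {k n : ℕ} (h : k < n) :
    (⇑D)^[k] u ∈ ordField F D u n :=
  IntermediateField.subset_adjoin _ _ ⟨k, h, rfl⟩

lemma exists_mem_ordField (D : Derivation ℤ E E) {u w : E} (hw : w ∈ genDF F D {u}) :
    ∃ n, w ∈ ordField F D u n := by
  induction hw using IntermediateField.adjoin_induction with
  | mem x hx =>
    obtain ⟨s, rfl, k, rfl⟩ := hx
    exact ⟨k + 1, iterate_mem_ordField F D s (Nat.lt_succ_self k)⟩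
  | algebraMap x => exact ⟨0, IntermediateField.algebraMap_mem _ x⟩
  | add x y _ _ hx hy =>
    obtain ⟨m, hm⟩ := hx
    obtain ⟨n, hn⟩ := hy
    exact ⟨max m n, add_mem (ordField_mono F D u (le_max_left m n) hm)
      (ordField_mono F D u (le_max_right m n) hn)⟩
  | inv x _ hx => exact hx.imp fun n hn => inv_mem hn
  | mul x y _ _ hx hy =>
    obtain ⟨m, hm⟩ := hx
    obtain ⟨n, hn⟩ := hy
    exact ⟨max m n, mul_mem (ordField_mono F D u (le_max_left m n) hm)
      (ordField_mono F D u (le_max_right m n) hn)⟩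

lemma derivation_mem_ordField {δF : Derivation ℤ F F} {D : Derivation ℤ E E}
    (hD : ∀ a : F, D (algebraMap F E a) = algebraMap F E (δF a)) {u w : E} {n : ℕ}
    (hw : w ∈ ordField F D u n) : D w ∈ ordField F D u (n + 1) := by
  have hle := ordField_mono F D u (Nat.le_succ n)
  induction hw using IntermediateField.adjoin_induction with
  | mem x hx =>
    obtain ⟨k, hk, rfl⟩ := hx
    rw [← Function.iterate_succ_apply' (⇑D) k u]
    exact iterate_mem_ordField F D u (Nat.succ_lt_succ hk)
  | algebraMap x =>
    rw [hD]
    exact IntermediateField.algebraMap_mem _ _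
  | add x y _ _ hx hy =>
    rw [map_add]
    exact add_mem hx hy
  | inv x hx hx' =>
    rw [Derivation.leibniz_inv, smul_eq_mul]
    exact mul_mem (neg_mem (pow_mem (inv_mem (hle hx)) 2)) hx'
  | mul x y hx hy hx' hy' =>
    rw [Derivation.leibniz, smul_eq_mul, smul_eq_mul]
    exact add_mem (mul_mem (hle hx) hy') (mul_mem (hle hy) hx')

lemma iterate_notMem_ordField {D : Derivation ℤ E E} {u : E} (hu : DiffTrans F D u) (n : ℕ) :
    (⇑D)^[n] u ∉ ordField F D u n := by
  intro h
  obtain ⟨r, hr, s, hs, h⟩ := IntermediateField.mem_adjoin_iff_div.1 h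
  have htr := AlgebraicIndependent.transcendental_adjoin hu (s := Set.Iio n) (i := n)
    (by simp)
  by_cases hs0 : s = 0
  · have h0 : (⇑D)^[n] u = 0 := by rw [h, hs0, div_zero]
    exact hu.ne_zero n h0
  · refine htr ⟨Polynomial.C ⟨s, hs⟩ * Polynomial.X - Polynomial.C ⟨r, hr⟩, ?_, ?_⟩
    · intro h0
      have := congrArg (fun p => p.coeff 1) h0
      simp only [Polynomial.coeff_sub, Polynomial.coeff_C_mul, Polynomial.coeff_X_one, mul_one,
        Polynomial.coeff_C_succ, sub_zero, Polynomial.coeff_zero] at this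
      exact hs0 (congrArg Subtype.val this)
    · rw [eq_div_iff hs0] at h
      rw [map_sub, map_mul, Polynomial.aeval_C, Polynomial.aeval_C, Polynomial.aeval_X]
      change s * (⇑D)^[n] u - r = 0
      rw [← h, mul_comm, sub_self]

/-- The chain rule `D(h(t)) = h^D(t) + h'(t) D t`, read modulo the field `L`. -/
lemma derivation_eval_sub_mem {L : IntermediateField F E} {D : Derivation ℤ E E} {t : E}
    (ht : t ∈ L) (h : Polynomial E) (hc : ∀ i, D (h.coeff i) ∈ L) :
    D (h.eval t) - h.derivative.eval t * D t ∈ L := by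
  have : D (h.eval t) - h.derivative.eval t * D t
      = ∑ i ∈ Finset.range (h.natDegree + 1), t ^ i * D (h.coeff i) := by
    rw [Polynomial.derivative_eval, Polynomial.sum_over_range _ (by simp),
      Polynomial.eval_eq_sum_range, map_sum, Finset.sum_mul, ← Finset.sum_sub_distrib]
    refine Finset.sum_congr rfl fun i _ => ?_
    rw [Derivation.leibniz, Derivation.leibniz_pow]
    simp only [smul_eq_mul, nsmul_eq_mul]
    ring
  rw [this]
  exact sum_mem fun i _ => mul_mem (pow_mem ht i) (hc i)

/-- If `t ∈ L` is algebraic over the subfield `{g ∈ L | D g ∈ L}` then `D t ∈ L`. The proof is by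
descent on the degree, replacing a polynomial whose derivative vanishes at `t` by that
derivative. -/
lemma derivation_mem_of_root [CharZero E] {L : IntermediateField F E} {D : Derivation ℤ E E}
    {t : E} (ht : t ∈ L) (n : ℕ) : ∀ h : Polynomial E, h.natDegree ≤ n → h ≠ 0 →
    h.eval t = 0 → (∀ i, h.coeff i ∈ L) → (∀ i, D (h.coeff i) ∈ L) → D t ∈ L := by
  induction n with
  | zero =>
    intro h hn h0 hr _ _
    rw [Polynomial.eq_C_of_natDegree_le_zero hn] at hr h0
    simp_all
  | succ n ih =>
    intro h hn h0 hr hc hDc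
    by_cases hd : h.derivative.eval t = 0
    · by_cases hd0 : h.derivative = 0
      · rw [Polynomial.eq_C_of_derivative_eq_zero hd0] at hr h0
        simp_all
      · refine ih h.derivative ?_ hd0 hd ?_ ?_
        · have := Polynomial.natDegree_derivative_le h
          omega
        · intro i
          rw [Polynomial.coeff_derivative]
          exact mul_mem (hc _) (add_mem (natCast_mem L i) (one_mem L))
        · intro i
          rw [Polynomial.coeff_derivative, Derivation.leibniz]
          simp only [map_add, Derivation.map_natCast, Derivation.map_one_eq_zero, add_zero,
            smul_eq_mul, mul_zero, zero_add]
          exact mul_mem (add_mem (natCast_mem L i) (one_mem L)) (hDc _)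
    · have h1 := derivation_eval_sub_mem F ht h hDc
      rw [hr, map_zero, zero_sub, neg_mem_iff] at h1
      have h2 : h.derivative.eval t ∈ L := by
        rw [Polynomial.derivative_eval, Polynomial.sum_def]
        exact sum_mem fun i _ => mul_mem (mul_mem (hc _) (natCast_mem L i)) (pow_mem ht _)
      have h3 := mul_mem (inv_mem h2) h1
      rwa [inv_mul_cancel_left₀ hd] at h3

/-- `D` raises the order of an element of `F⟨u⟩ ∖ F`. If `f = p(t) / q(t)` has
order `n`, where `t = D^n u`, then `t` is a root of `f q - p`; were `D f` of order at most `n`,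
then so would be `D t = D^{n+1} u`. -/
lemma derivation_notMem_ordField [CharZero E] {δF : Derivation ℤ F F} {D : Derivation ℤ E E}
    (hD : ∀ a : F, D (algebraMap F E a) = algebraMap F E (δF a)) {u f : E}
    (hu : DiffTrans F D u) {n : ℕ} (hf : f ∈ ordField F D u (n + 1))
    (hf' : f ∉ ordField F D u n) : D f ∉ ordField F D u (n + 1) := by
  intro hDf
  set K := ordField F D u n
  have hle : K ≤ ordField F D u (n + 1) := ordField_mono F D u (Nat.le_succ n)
  set t := (⇑D)^[n] u with ht
  have htm : t ∈ ordField F D u (n + 1) := iterate_mem_ordField F D u (Nat.lt_succ_self n)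
  have hle2 : ordField F D u (n + 1) ≤ (IntermediateField.adjoin K {t}).restrictScalars F := by
    refine IntermediateField.adjoin_le_iff.2 ?_
    rintro _ ⟨k, hk, rfl⟩
    rcases Nat.lt_succ_iff_lt_or_eq.1 hk with hk | rfl
    · exact IntermediateField.algebraMap_mem (IntermediateField.adjoin K {t})
        (⟨_, iterate_mem_ordField F D u hk⟩ : K)
    · exact IntermediateField.mem_adjoin_simple_self K t
  obtain ⟨p, q, hpq⟩ := (IntermediateField.mem_adjoin_simple_iff K f).1 (hle2 hf)
  have hq : Polynomial.aeval t q ≠ 0 := by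
    intro h
    rw [h, div_zero] at hpq
    exact hf' (hpq ▸ zero_mem K)
  have hcoeff : ∀ i, (Polynomial.C f * q.map (algebraMap K E) - p.map (algebraMap K E)).coeff i
      = f * (q.coeff i : E) - (p.coeff i : E) := fun i => by
    rw [Polynomial.coeff_sub, Polynomial.coeff_C_mul, Polynomial.coeff_map, Polynomial.coeff_map]
    rfl
  have key := derivation_mem_of_root F (D := D) htm _
    (Polynomial.C f * q.map (algebraMap K E) - p.map (algebraMap K E)) le_rfl ?_ ?_ ?_ ?_
  · rw [ht, ← Function.iterate_succ_apply' (⇑D) n u] at key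
    exact iterate_notMem_ordField F hu (n + 1) key
  · -- a vanishing `f q - p` would give `f = pᵢ / qᵢ ∈ K`
    intro h0
    obtain ⟨i, hi⟩ : ∃ i, q.coeff i ≠ 0 := by
      by_contra! hall
      exact hq (by rw [show q = 0 from Polynomial.ext (by simpa using hall), map_zero])
    have h1 := hcoeff i
    rw [h0, Polynomial.coeff_zero] at h1
    have hi' : (q.coeff i : E) ≠ 0 := by simpa using hi
    apply hf'
    rw [show f = (p.coeff i : E) / (q.coeff i : E) by
      rw [eq_div_iff hi']; linear_combination -h1]
    exact div_mem (p.coeff i).2 (q.coeff i).2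
  · rw [Polynomial.eval_sub, Polynomial.eval_mul, Polynomial.eval_C, Polynomial.eval_map_algebraMap,
      Polynomial.eval_map_algebraMap, hpq, div_mul_cancel₀ _ hq, sub_self]
  · intro i
    rw [hcoeff]
    exact sub_mem (mul_mem hf (hle (q.coeff i).2)) (hle (p.coeff i).2)
  · intro i
    rw [hcoeff, map_sub, Derivation.leibniz, smul_eq_mul, smul_eq_mul]
    exact sub_mem (add_mem (mul_mem hf (derivation_mem_ordField F hD (q.coeff i).2))
      (mul_mem (hle (q.coeff i).2) hDf)) (derivation_mem_ordField F hD (p.coeff i).2)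

/-- An element of `F⟨u⟩` that is annihilated by a nonzero linear differential operator
`∑ cₖ Dᵏ` over `F` lies in `F`. -/
lemma mem_range_of_operator_eq_zero [CharZero E] {δF : Derivation ℤ F F} {D : Derivation ℤ E E}
    (hD : ∀ a : F, D (algebraMap F E a) = algebraMap F E (δF a)) {u w : E}
    (hu : DiffTrans F D u) (hw : w ∈ genDF F D {u}) {c : ℕ → F} {M : ℕ} (hM : c M ≠ 0)
    (h : ∑ k ∈ Finset.range (M + 1), algebraMap F E (c k) * (⇑D)^[k] w = 0) :
    w ∈ (algebraMap F E).range := by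
  classical
  have hex := exists_mem_ordField F D hw
  rcases hN : Nat.find hex with _ | N
  · have := Nat.find_spec hex
    rw [hN] at this
    simpa [ordField, IntermediateField.mem_bot] using this
  exfalso
  have h0 : w ∈ ordField F D u (N + 1) := hN ▸ Nat.find_spec hex
  have h0' : w ∉ ordField F D u N := Nat.find_min hex (by omega)
  have hk : ∀ k, (⇑D)^[k] w ∈ ordField F D u (N + k + 1) ∧
      (⇑D)^[k] w ∉ ordField F D u (N + k) := by
    intro k
    induction k with
    | zero => exact ⟨h0, h0'⟩
    | succ k ih =>
      rw [Function.iterate_succ_apply']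
      exact ⟨derivation_mem_ordField F hD ih.1,
        derivation_notMem_ordField F hD hu ih.1 ih.2⟩
  rw [Finset.sum_range_succ] at h
  have hlow : ∑ k ∈ Finset.range M, algebraMap F E (c k) * (⇑D)^[k] w
      ∈ ordField F D u (N + M) :=
    sum_mem fun k hkM => mul_mem (IntermediateField.algebraMap_mem _ _)
      (ordField_mono F D u (by have := Finset.mem_range.1 hkM; omega) (hk k).1)
  refine (hk M).2 ?_
  have hcM : algebraMap F E (c M) ≠ 0 := by simpa using hM
  rw [show (⇑D)^[M] w = (algebraMap F E (c M))⁻¹ *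
      -(∑ k ∈ Finset.range M, algebraMap F E (c k) * (⇑D)^[k] w) by
    rw [eq_inv_mul_iff_mul_eq₀ hcM]; linear_combination h]
  exact mul_mem (inv_mem (IntermediateField.algebraMap_mem _ _)) (neg_mem hlow)

/-! ### Polynomials of degree at most one -/

/-- The `F`-space of polynomials of total degree at most one, as the span of `1` and the
variables. -/
def affineSpan (σ : Type*) : Submodule F (MvPolynomial σ F) :=
  Submodule.span F (insert 1 (Set.range X))

lemma one_mem_affineSpan (σ : Type*) : (1 : MvPolynomial σ F) ∈ affineSpan F σ :=
  Submodule.subset_span (Set.mem_insert _ _)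

lemma X_mem_affineSpan {σ : Type*} (v : σ) : (X v : MvPolynomial σ F) ∈ affineSpan F σ :=
  Submodule.subset_span (Set.mem_insert_of_mem _ ⟨v, rfl⟩)

lemma C_mem_affineSpan (σ : Type*) (c : F) : (C c : MvPolynomial σ F) ∈ affineSpan F σ := by
  rw [← mul_one (C c), ← smul_eq_C_mul]
  exact Submodule.smul_mem _ _ (one_mem_affineSpan F σ)

lemma mem_affineSpan {σ : Type*} {P : MvPolynomial σ F} (h : P.totalDegree ≤ 1) :
    P ∈ affineSpan F σ := by
  rw [P.as_sum]
  refine sum_mem fun m hm => ?_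
  have hdeg : m.degree ≤ 1 := (le_totalDegree hm).trans h
  rw [← mul_one (coeff m P), ← smul_eq_mul, ← smul_monomial]
  refine Submodule.smul_mem _ _ ?_
  rcases Nat.le_one_iff_eq_zero_or_eq_one.1 hdeg with h0 | h1
  · rw [(Finsupp.degree_eq_zero_iff m).1 h0]
    exact one_mem_affineSpan F σ
  · obtain ⟨v, rfl⟩ := (Finsupp.sum_eq_one_iff m).1 h1
    exact X_mem_affineSpan F v

/-- Ideal membership among polynomials of degree at most one is linear: if `1` is not in the
`F`-span `W` of `S`, then every such element of the ideal generated by `S` already lies in `W`.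
A linear functional killing `W` with value `1` at `1` is, on polynomials of degree at most one,
the evaluation at a point of `F^σ`; so `W` has a zero at which a given affine form outside `W` does
not vanish. -/
lemma mem_span_of_mem_ideal_span {σ : Type*} {S : Set (MvPolynomial σ F)}
    (hS : S ⊆ affineSpan F σ) (h1 : (1 : MvPolynomial σ F) ∉ Submodule.span F S)
    {P : MvPolynomial σ F} (hP : P ∈ affineSpan F σ) (hPI : P ∈ Ideal.span S) :
    P ∈ Submodule.span F S := by
  by_contra hPW
  obtain ⟨φ, hφ1, hφP, hφW⟩ : ∃ φ : MvPolynomial σ F →ₗ[F] F,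
      φ 1 ≠ 0 ∧ φ P ≠ 0 ∧ Submodule.span F S ≤ LinearMap.ker φ := by
    obtain ⟨a, ha, haW⟩ := Submodule.exists_le_ker_of_notMem h1
    obtain ⟨b, hb, hbW⟩ := Submodule.exists_le_ker_of_notMem hPW
    by_cases haP : a P = 0
    · by_cases hb1 : b 1 = 0
      · refine ⟨a + b, by simpa [hb1] using ha, by simpa [haP] using hb, fun x hx => ?_⟩
        have hax : a x = 0 := haW hx
        have hbx : b x = 0 := hbW hx
        simp [hax, hbx]
      · exact ⟨b, hb1, hb, hbW⟩
    · exact ⟨a, ha, haP, haW⟩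
  have hev : ∀ f ∈ affineSpan F σ, φ f = φ 1 * eval (fun v => φ (X v) / φ 1) f := by
    intro f hf
    induction hf using Submodule.span_induction with
    | mem x hx =>
      rcases hx with rfl | ⟨v, rfl⟩
      · simp
      · rw [eval_X, mul_div_cancel₀ _ hφ1]
    | zero => simp
    | add x y _ _ hx hy => rw [map_add, map_add, hx, hy, mul_add]
    | smul a x _ hx => rw [map_smul, smul_eval, hx, smul_eq_mul]; ring
  have hker : Ideal.span S ≤ RingHom.ker (eval fun v => φ (X v) / φ 1) := by
    refine Ideal.span_le.2 fun f hf => ?_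
    have h0 : φ f = 0 := hφW (Submodule.subset_span hf)
    rw [hev f (hS hf)] at h0
    exact (mul_eq_zero.1 h0).resolve_left hφ1
  have h0 : eval (fun v => φ (X v) / φ 1) P = 0 := hker hPI
  rw [hev P hP, h0, mul_zero] at hφP
  exact hφP rfl

lemma exists_sum_range_of_mem_span {V : Type*} [AddCommGroup V] [Module F V] {v : ℕ → V} {x : V}
    (hx : x ∈ Submodule.span F (Set.range v)) (hx0 : x ≠ 0) :
    ∃ (c : ℕ → F) (M : ℕ), c M ≠ 0 ∧ ∑ k ∈ Finset.range (M + 1), c k • v k = x := by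
  obtain ⟨c, rfl⟩ := Finsupp.mem_span_range_iff_exists_finsupp.1 hx
  have hne : c.support.Nonempty := by
    rw [Finsupp.support_nonempty_iff]
    rintro rfl
    exact hx0 Finsupp.sum_zero_index
  refine ⟨c, c.support.max' hne, Finsupp.mem_support_iff.1 (Finset.max'_mem _ hne), ?_⟩
  refine (Finsupp.sum_of_support_subset c (fun k hk => ?_) (fun k a => a • v k)
    fun k _ => zero_smul F (v k)).symm
  exact Finset.mem_range_succ_iff.2 (Finset.le_max' _ _ hk)

/-! ### Derivatives of linear differential polynomials -/

section DiffPoly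

variable {F}
variable {δF : Derivation ℤ F F}
  {dxy : Derivation ℤ (MvPolynomial (Fin 2 × ℕ) F) (MvPolynomial (Fin 2 × ℕ) F)}

lemma derivation_smul (hdxyC : ∀ a : F, dxy (C a) = C (δF a)) (a : F)
    (P : MvPolynomial (Fin 2 × ℕ) F) : dxy (a • P) = a • dxy P + δF a • P := by
  rw [smul_eq_C_mul, Derivation.leibniz, hdxyC, smul_eq_mul, smul_eq_mul, smul_eq_C_mul,
    smul_eq_C_mul, mul_comm P]

lemma derivation_mem_affineSpan (hdxyC : ∀ a : F, dxy (C a) = C (δF a))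
    (hdxyX : ∀ (i : Fin 2) (k : ℕ), dxy (X (i, k)) = X (i, k + 1))
    {P : MvPolynomial (Fin 2 × ℕ) F} (hP : P ∈ affineSpan F (Fin 2 × ℕ)) :
    dxy P ∈ affineSpan F (Fin 2 × ℕ) := by
  induction hP using Submodule.span_induction with
  | mem x hx =>
    rcases hx with rfl | ⟨⟨i, k⟩, rfl⟩
    · rw [Derivation.map_one_eq_zero]
      exact zero_mem _
    · rw [hdxyX]
      exact X_mem_affineSpan F _
  | zero => simp
  | add x y _ _ hx hy =>
    rw [map_add]
    exact add_mem hx hy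
  | smul a x hx hx' =>
    rw [derivation_smul hdxyC]
    exact add_mem (Submodule.smul_mem _ _ hx') (Submodule.smul_mem _ _ hx)

lemma coeff_derivation (hdxyC : ∀ a : F, dxy (C a) = C (δF a))
    (hdxyX : ∀ (i : Fin 2) (k : ℕ), dxy (X (i, k)) = X (i, k + 1))
    {P : MvPolynomial (Fin 2 × ℕ) F} (hP : P ∈ affineSpan F (Fin 2 × ℕ)) (i : Fin 2) (k : ℕ) :
    coeff (Finsupp.single (i, k + 1) 1) (dxy P) =
      δF (coeff (Finsupp.single (i, k + 1) 1) P) + coeff (Finsupp.single (i, k) 1) P := by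
  classical
  induction hP using Submodule.span_induction with
  | mem x hx =>
    rcases hx with rfl | ⟨⟨j, l⟩, rfl⟩
    · have h : ∀ l, coeff (Finsupp.single (i, l) 1) (1 : MvPolynomial (Fin 2 × ℕ) F) = 0 :=
        fun l => by
          rw [coeff_one, if_neg]
          exact fun h => one_ne_zero (Finsupp.single_eq_zero.1 h.symm)
      simp [h]
    · rw [hdxyX, coeff_X, coeff_X, coeff_X]
      simp only [Finsupp.single_left_inj one_ne_zero, Prod.mk.injEq, add_left_inj]
      split_ifs <;> simp
  | zero => simp
  | add x y _ _ hx hy =>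
    simp only [map_add, coeff_add, hx, hy]
    ring
  | smul a x hx hx' =>
    rw [derivation_smul hdxyC]
    simp only [coeff_add, coeff_smul, hx', smul_eq_mul, Derivation.leibniz]
    ring

lemma iterate_mem_affineSpan (hdxyC : ∀ a : F, dxy (C a) = C (δF a))
    (hdxyX : ∀ (i : Fin 2) (k : ℕ), dxy (X (i, k)) = X (i, k + 1))
    {P : MvPolynomial (Fin 2 × ℕ) F} (hP : P ∈ affineSpan F (Fin 2 × ℕ)) (m : ℕ) :
    (⇑dxy)^[m] P ∈ affineSpan F (Fin 2 × ℕ) := by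
  induction m with
  | zero => exact hP
  | succ m ih =>
    rw [Function.iterate_succ_apply']
    exact derivation_mem_affineSpan hdxyC hdxyX ih

/-- If a linear polynomial has order at most `n` in the `i`-th indeterminate, then its `m`-th
derivative has order at most `n + m` in it, with the same coefficient in the top position. -/
lemma coeff_iterate (hdxyC : ∀ a : F, dxy (C a) = C (δF a))
    (hdxyX : ∀ (i : Fin 2) (k : ℕ), dxy (X (i, k)) = X (i, k + 1))
    {P : MvPolynomial (Fin 2 × ℕ) F} (hP : P ∈ affineSpan F (Fin 2 × ℕ)) {i : Fin 2} {n : ℕ}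
    (hn : ∀ k, n < k → coeff (Finsupp.single (i, k) 1) P = 0) (m : ℕ) :
    coeff (Finsupp.single (i, n + m) 1) ((⇑dxy)^[m] P) = coeff (Finsupp.single (i, n) 1) P ∧
    ∀ k, n + m < k → coeff (Finsupp.single (i, k) 1) ((⇑dxy)^[m] P) = 0 := by
  induction m with
  | zero => exact ⟨rfl, hn⟩
  | succ m ih =>
    have hm := iterate_mem_affineSpan hdxyC hdxyX hP m
    rw [Function.iterate_succ_apply']
    constructor
    · rw [← add_assoc, coeff_derivation hdxyC hdxyX hm, ih.2 _ (Nat.lt_succ_self _), map_zero,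
        zero_add, ih.1]
    · rintro (_ | k) hk
      · omega
      · rw [coeff_derivation hdxyC hdxyX hm, ih.2 _ (by omega), ih.2 _ (by omega), map_zero,
          zero_add]

lemma exists_leading_coeff {P : MvPolynomial (Fin 2 × ℕ) F} (hP : P.totalDegree ≤ 1)
    (hPF : ∀ c : F, P ≠ C c) :
    ∃ (i : Fin 2) (n : ℕ), coeff (Finsupp.single (i, n) 1) P ≠ 0 ∧
      ∀ k, n < k → coeff (Finsupp.single (i, k) 1) P = 0 := by
  classical
  obtain ⟨i, k, hk⟩ : ∃ i k, coeff (Finsupp.single (i, k) 1) P ≠ 0 := by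
    by_contra! hall
    refine hPF (coeff 0 P) (MvPolynomial.ext _ _ fun m => ?_)
    rw [coeff_C]
    split_ifs with h0
    · rw [h0]
    by_contra hm
    have hdeg : m.degree ≤ 1 := (le_totalDegree (mem_support_iff.2 hm)).trans hP
    rcases Nat.le_one_iff_eq_zero_or_eq_one.1 hdeg with h | h
    · exact h0 ((Finsupp.degree_eq_zero_iff m).1 h).symm
    · obtain ⟨⟨i, k⟩, rfl⟩ := (Finsupp.sum_eq_one_iff m).1 h
      exact hm (hall i k)
  have hfin : {l : ℕ | coeff (Finsupp.single (i, l) 1) P ≠ 0}.Finite := by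
    refine Set.Finite.of_finite_image (f := fun l => Finsupp.single (i, l) 1)
      (P.support.finite_toSet.subset ?_) ?_
    · rintro _ ⟨l, hl, rfl⟩
      exact mem_support_iff.2 hl
    · intro a _ b _ hab
      simpa [Finsupp.single_left_inj one_ne_zero] using hab
  obtain ⟨n, hn, hmax⟩ := Set.exists_max_image _ id hfin ⟨k, hk⟩
  refine ⟨i, n, hn, fun l hl => ?_⟩
  by_contra h
  exact absurd (hmax l h) (not_le.2 hl)

lemma one_notMem_span_iterate (hdxyC : ∀ a : F, dxy (C a) = C (δF a))
    (hdxyX : ∀ (i : Fin 2) (k : ℕ), dxy (X (i, k)) = X (i, k + 1))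
    {P : MvPolynomial (Fin 2 × ℕ) F} (hP : P.totalDegree ≤ 1) (hPF : ∀ c : F, P ≠ C c) :
    (1 : MvPolynomial (Fin 2 × ℕ) F) ∉
      Submodule.span F (Set.range fun k : ℕ => (⇑dxy)^[k] P) := by
  classical
  intro h
  obtain ⟨c, M, hM, hsum⟩ := exists_sum_range_of_mem_span F h one_ne_zero
  obtain ⟨i, n, hn, hmax⟩ := exists_leading_coeff hP hPF
  have hc := coeff_iterate hdxyC hdxyX (mem_affineSpan F hP) hmax
  have h1 := congrArg (coeff (Finsupp.single (i, n + M) 1)) hsum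
  rw [Finset.sum_range_succ, coeff_add, coeff_sum, Finset.sum_eq_zero, zero_add, coeff_smul,
    (hc M).1, coeff_one, if_neg, smul_eq_mul] at h1
  · exact mul_ne_zero hM hn h1
  · exact fun h => one_ne_zero (Finsupp.single_eq_zero.1 h.symm)
  · intro k hk
    rw [coeff_smul, (hc k).2 _ (by have := Finset.mem_range.1 hk; omega), smul_zero]

lemma evalD2_derivation (hdxyC : ∀ a : F, dxy (C a) = C (δF a))
    (hdxyX : ∀ (i : Fin 2) (k : ℕ), dxy (X (i, k)) = X (i, k + 1))
    {D : Derivation ℤ E E} (hD : ∀ a : F, D (algebraMap F E a) = algebraMap F E (δF a))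
    (η₁ η₂ : E) (P : MvPolynomial (Fin 2 × ℕ) F) :
    evalD2 F D η₁ η₂ (dxy P) = D (evalD2 F D η₁ η₂ P) := by
  induction P using MvPolynomial.induction_on with
  | C a => rw [hdxyC, evalD2, aeval_C, aeval_C, hD]
  | add p q hp hq => simp only [map_add, hp, hq]
  | mul_X p v hp =>
    obtain ⟨i, k⟩ := v
    have hX : evalD2 F D η₁ η₂ (X (i, k + 1)) = D (evalD2 F D η₁ η₂ (X (i, k))) := by
      simp only [evalD2, aeval_X]
      exact Function.iterate_succ_apply' (⇑D) k _
    simp only [Derivation.leibniz, smul_eq_mul, map_add, map_mul, hdxyX, hX, hp]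

lemma evalD2_iterate (hdxyC : ∀ a : F, dxy (C a) = C (δF a))
    (hdxyX : ∀ (i : Fin 2) (k : ℕ), dxy (X (i, k)) = X (i, k + 1))
    {D : Derivation ℤ E E} (hD : ∀ a : F, D (algebraMap F E a) = algebraMap F E (δF a))
    (η₁ η₂ : E) (P : MvPolynomial (Fin 2 × ℕ) F) (k : ℕ) :
    evalD2 F D η₁ η₂ ((⇑dxy)^[k] P) = (⇑D)^[k] (evalD2 F D η₁ η₂ P) :=
  Function.Semiconj.iterate_right (f := evalD2 F D η₁ η₂)
    (evalD2_derivation hdxyC hdxyX hD η₁ η₂) k P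

end DiffPoly

lemma iterate_mem_genDF {δF : Derivation ℤ F F} {D : Derivation ℤ E E}
    (hD : ∀ a : F, D (algebraMap F E a) = algebraMap F E (δF a)) {u w : E}
    (hw : w ∈ genDF F D {u}) (k : ℕ) : (⇑D)^[k] w ∈ genDF F D {u} := by
  have hle : ∀ n, ordField F D u n ≤ genDF F D {u} := fun n =>
    IntermediateField.adjoin.mono _ _ _ (by rintro _ ⟨k, _, rfl⟩; exact ⟨u, rfl, k, rfl⟩)
  induction k with
  | zero => exact hw
  | succ k ih =>
    obtain ⟨n, hn⟩ := exists_mem_ordField F D ih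
    rw [Function.iterate_succ_apply']
    exact hle _ (derivation_mem_ordField F hD hn)

lemma evalD2_mem_genDF {δF : Derivation ℤ F F} {D : Derivation ℤ E E}
    (hD : ∀ a : F, D (algebraMap F E a) = algebraMap F E (δF a)) {u η₁ η₂ : E}
    (h₁ : η₁ ∈ genDF F D {u}) (h₂ : η₂ ∈ genDF F D {u}) (P : MvPolynomial (Fin 2 × ℕ) F) :
    evalD2 F D η₁ η₂ P ∈ genDF F D {u} := by
  induction P using MvPolynomial.induction_on with
  | C a =>
    rw [evalD2, aeval_C]
    exact IntermediateField.algebraMap_mem _ a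
  | add p q hp hq =>
    rw [map_add]
    exact add_mem hp hq
  | mul_X p v hp =>
    rw [map_mul]
    refine mul_mem hp ?_
    rw [evalD2, aeval_X]
    refine iterate_mem_genDF F hD ?_ _
    split_ifs <;> assumption

/-! ### Linear unirational curves -/

/-- if the linear differential curve `(C, A)` is unirational and
`[A] ⊆ [B]` for a linear `B`, then `[A] = [B]`. -/
theorem linear_unirational_diffIdeal_eq [CharZero F]
    (δF : Derivation ℤ F F) (D : Derivation ℤ E E)
    (hD : ∀ a : F, D (algebraMap F E a) = algebraMap F E (δF a))
    (dxy : Derivation ℤ (MvPolynomial (Fin 2 × ℕ) F) (MvPolynomial (Fin 2 × ℕ) F))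
    (hdxyC : ∀ a : F, dxy (C a) = C (δF a))
    (hdxyX : ∀ (i : Fin 2) (k : ℕ), dxy (X (i, k)) = X (i, k + 1))
    (A B : MvPolynomial (Fin 2 × ℕ) F)
    (hAdeg : A.totalDegree ≤ 1) (hBdeg : B.totalDegree ≤ 1)
    (hAF : ∀ c : F, A ≠ C c) (hBF : ∀ c : F, B ≠ C c)
    (u : E) (hu : DiffTrans F D u)
    (huni : ∃ η₁ η₂ : E, η₁ ∈ genDF F D {u} ∧ η₂ ∈ genDF F D {u} ∧
      ¬(η₁ ∈ (algebraMap F E).range ∧ η₂ ∈ (algebraMap F E).range) ∧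
      {B' : MvPolynomial (Fin 2 × ℕ) F | evalD2 F D η₁ η₂ B' = 0}
        = (diffIdeal dxy A : Set (MvPolynomial (Fin 2 × ℕ) F)))
    (hsub : diffIdeal dxy A ≤ diffIdeal dxy B) :
    diffIdeal dxy A = diffIdeal dxy B := by
  obtain ⟨η₁, η₂, h₁, h₂, -, hI⟩ := huni
  have : CharZero E := charZero_of_injective_algebraMap (algebraMap F E).injective
  have mem_iff : ∀ P, P ∈ diffIdeal dxy A ↔ evalD2 F D η₁ η₂ P = 0 := fun P =>
    (Set.ext_iff.1 hI P).symm
  have hS : (Set.range fun k : ℕ => (⇑dxy)^[k] B) ⊆ affineSpan F (Fin 2 × ℕ) := by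
    rintro _ ⟨k, rfl⟩
    exact iterate_mem_affineSpan hdxyC hdxyX (mem_affineSpan F hBdeg) k
  have h1 := one_notMem_span_iterate hdxyC hdxyX hBdeg hBF
  have hAA : A ∈ diffIdeal dxy A := Ideal.subset_span ⟨0, rfl⟩
  have hA0 : A ≠ 0 := by simpa using hAF 0
  obtain ⟨c, M, hM, hsum⟩ := exists_sum_range_of_mem_span F
    (mem_span_of_mem_ideal_span F hS h1 (mem_affineSpan F hAdeg) (hsub hAA)) hA0
  -- the operator `∑ cₖ Dᵏ` with `A = ∑ cₖ dᵏ B` annihilates `B(η)`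
  obtain ⟨b, hb⟩ : evalD2 F D η₁ η₂ B ∈ (algebraMap F E).range := by
    refine mem_range_of_operator_eq_zero F hD hu (evalD2_mem_genDF F hD h₁ h₂ B) hM ?_
    rw [← (mem_iff A).1 hAA, ← hsum, map_sum]
    refine Finset.sum_congr rfl fun k _ => ?_
    rw [map_smul, evalD2_iterate hdxyC hdxyX hD, Algebra.smul_def]
  have hBb : B - C b ∈ diffIdeal dxy A := by
    rw [mem_iff, map_sub, ← hb, evalD2, aeval_C, sub_self]
  have hBB : B ∈ diffIdeal dxy B := Ideal.subset_span ⟨0, rfl⟩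
  have hCb : C b ∈ diffIdeal dxy B := by
    have := sub_mem hBB (hsub hBb)
    rwa [sub_sub_cancel] at this
  have hb0 : b = 0 := by
    by_contra hb0
    have h2 := mem_span_of_mem_ideal_span F hS h1 (C_mem_affineSpan F _ b) hCb
    have h3 := Submodule.smul_mem _ b⁻¹ h2
    rw [smul_eq_C_mul, ← C_mul, inv_mul_cancel₀ hb0, C_1] at h3
    exact h1 h3
  rw [hb0, map_zero] at hb
  have hBk : ∀ k, (⇑dxy)^[k] B ∈ diffIdeal dxy A := fun k => by
    rw [mem_iff, evalD2_iterate hdxyC hdxyX hD, ← hb]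
    exact iterate_map_zero (D : E →+ E) k
  exact le_antisymm hsub (Ideal.span_le.2 (Set.range_subset_iff.2 hBk))

end DiffCurve
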